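/- arXiv:1407.7347 — 2 statements merged into one kernel-verified Lean document; each statement's English description precedes it below -/
import Mathlib

section
/- Fix M > 0. There exists a constant C > 0, independent of t, such that for every f ∈ C²([0,∞)×ℝ²) with supp f(t,·) ⊂ {x : |x| ≤ M + t} for each t, every t ≥ 0, and every x with |x| ≥ M+1: σ(x)^{1/2} σ₋(t,x)^{−1} |f(t,x)| ≤ C Σ_{j=0}^{1} Σ_{|α|=0}^{2−j} ‖∂∇^α Ω^j f(t,·)‖_{L²({|x| ≥ M+1})}. -/
/-!
Fix `t` and write `g = f(t, ·)`, in polar coordinates `(r, θ)`; `g` and `Ωg = ∂_θ g` vanish for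
`|x| > M + t`. For any `C¹` function `h` vanishing at `r = K`, the fundamental theorem of
calculus along a ray and Cauchy–Schwarz give, because `r ≤ s` on `[r, K]`,
`r h(r,θ)² ≤ (K - r) ∫_r^K |∂_r h(s,θ)|² s ds`. Integrating over `θ` and using `|∂_r h| ≤ |∇h|`,
`r ∫ h(r,θ)² dθ ≤ (K - r) ‖∇h‖²_{L²(|x| ≥ M+1)}` (`radial_estimate`). With `K = M + t + 1`, the
factor `K - r` is at most `(M + 1) σ₋`.

Applied to `h = g` and `h = Ωg`, this bounds the `L²` norms of `g` and `∂_θ g` over the circle of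
radius `r`, and one-dimensional Sobolev embedding on the circle (`angular_sobolev`) bounds `g`
pointwise. Thus only the terms `‖∇f‖` and `‖∇Ωf‖` of the right-hand side are needed
(`four_terms_le`); in particular no third-order derivative, which for a merely `C²` function
need not exist, enters the argument.
-/

noncomputable section

open Real MeasureTheory Set

set_option linter.unusedVariables false

/-- A function of time `t` and space `(x, y)`. -/
abbrev F3 : Type := ℝ → ℝ → ℝ → ℝ

/-- Partial derivative in time. -/
def pt (f : F3) : F3 := fun t x y => deriv (fun s => f s x y) t
/-- Partial derivative in the first space variable. -/
def px (f : F3) : F3 := fun t x y => deriv (fun s => f t s y) x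
/-- Partial derivative in the second space variable. -/
def py (f : F3) : F3 := fun t x y => deriv (fun s => f t x s) y

/-- `∂ = (∂_t, ∂_1, ∂_2)`. -/
def pdi : Fin 3 → F3 → F3 := ![pt, px, py]

/-- The scaling field `X = t∂_t + x₁∂₁ + x₂∂₂`. -/
def Xf (f : F3) : F3 := fun t x y => t * pt f t x y + x * px f t x y + y * py f t x y
/-- The rotation field `Ω = x₁∂₂ − x₂∂₁`. -/
def Om (f : F3) : F3 := fun t x y => x * py f t x y - y * px f t x y
/-- The Lorentz boost `L₁ = t∂₁ + x₁∂_t`. -/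
def L1f (f : F3) : F3 := fun t x y => t * px f t x y + x * pt f t x y
/-- The Lorentz boost `L₂ = t∂₂ + x₂∂_t`. -/
def L2f (f : F3) : F3 := fun t x y => t * py f t x y + y * pt f t x y

/-- The family `Γ = (∂_t, ∂_1, ∂_2, X)`. -/
def GammaF : Fin 4 → F3 → F3 := ![pt, px, py, Xf]

/-- Iterated composition `Γ^α` over a word `α`. -/
def GIter : List (Fin 4) → F3 → F3
  | [], f => f
  | a :: l, f => GammaF a (GIter l f)

/-- The family `Λ = (∂_t, ∂_1, ∂_2, Ω, X, L₁, L₂)`. -/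
def LamF : Fin 7 → F3 → F3 := ![pt, px, py, Om, Xf, L1f, L2f]

/-- Iterated composition `Λ^α` over a word `α`. -/
def LIter : List (Fin 7) → F3 → F3
  | [], f => f
  | a :: l, f => LamF a (LIter l f)

/-- Iterated composition `∂^β` over a word `β`. -/
def PIter : List (Fin 3) → F3 → F3
  | [], f => f
  | a :: l, f => pdi a (PIter l f)

/-- `r = |x|`. -/
def rad (x y : ℝ) : ℝ := Real.sqrt (x ^ 2 + y ^ 2)
/-- `σ₋(t,x) = 1 + |t − |x||`. -/
def sm (t x y : ℝ) : ℝ := 1 + |t - rad x y|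
/-- `σ₊(t,x) = 1 + t + |x|`. -/
def sp (t x y : ℝ) : ℝ := 1 + t + rad x y

/-- `f` is a `C^∞` function of `(t, x)`. -/
def Smooth3 (f : F3) : Prop := ContDiff ℝ (⊤ : ℕ∞) (fun p : ℝ × ℝ × ℝ => f p.1 p.2.1 p.2.2)

/-- `Z₁ = ∂₁ + (x₁/|x|)∂_t`. -/
def Z1 (f : F3) : F3 := fun t x y => px f t x y + (x / rad x y) * pt f t x y
/-- `Z₂ = ∂₂ + (x₂/|x|)∂_t`. -/
def Z2 (f : F3) : F3 := fun t x y => py f t x y + (y / rad x y) * pt f t x y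
/-- The family `Z = (Z₁, Z₂)`. -/
def Zi : Fin 2 → F3 → F3 := ![Z1, Z2]

/-- `f` is radially symmetric in the space variables. -/
def RadialF (f : F3) : Prop := ∀ t x y x' y', rad x y = rad x' y' → f t x y = f t x' y'

/-- The `L²(ℝ²)` norm. -/
def L2n (g : ℝ → ℝ → ℝ) : ℝ := Real.sqrt (∫ q : ℝ × ℝ, (g q.1 q.2) ^ 2)

/-- The `L²` norm over a region `S ⊆ ℝ²`. -/
def L2nS (S : Set (ℝ × ℝ)) (g : ℝ → ℝ → ℝ) : ℝ := Real.sqrt (∫ q in S, (g q.1 q.2) ^ 2)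

/-- The exterior region `{x : |x| ≥ M + 1}`. -/
def regOut (M : ℝ) : Set (ℝ × ℝ) := {q | M + 1 ≤ rad q.1 q.2}

/-- The spatial derivatives `∇ = (∂₁, ∂₂)`. -/
def spi : Fin 2 → F3 → F3 := ![px, py]

/-- Iterated spatial derivative `∇^α`. -/
def SIter : List (Fin 2) → F3 → F3
  | [], f => f
  | a :: l, f => spi a (SIter l f)

/-! ### Cauchy–Schwarz and polar coordinates -/

/-- Cauchy–Schwarz against the constant function `1`. -/
lemma sq_integral_le {a b : ℝ} (hab : a ≤ b) {u : ℝ → ℝ} (hu : Continuous u) :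
    (∫ s in a..b, u s) ^ 2 ≤ (b - a) * ∫ s in a..b, u s ^ 2 := by
  rcases hab.eq_or_lt with rfl | hlt
  · simp
  set A := ∫ s in a..b, u s with hA
  have hL : 0 < b - a := by linarith
  -- expand the nonnegative variance `∫ (u - A / (b - a))²`
  have h0 : 0 ≤ ∫ s in a..b, (u s - A / (b - a)) ^ 2 :=
    intervalIntegral.integral_nonneg hab fun s _ => sq_nonneg _
  have h1 : ∫ s in a..b, (u s - A / (b - a)) ^ 2
      = (∫ s in a..b, u s ^ 2) - 2 * (A / (b - a)) * A + (b - a) * (A / (b - a)) ^ 2 := by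
    have e : (fun s => (u s - A / (b - a)) ^ 2)
        = fun s => (u s ^ 2 - 2 * (A / (b - a)) * u s) + (A / (b - a)) ^ 2 := by
      funext s; ring
    rw [e, intervalIntegral.integral_add, intervalIntegral.integral_sub,
      intervalIntegral.integral_const_mul, intervalIntegral.integral_const, smul_eq_mul]
    all_goals exact Continuous.intervalIntegrable (by fun_prop) _ _
  have h2 : (∫ s in a..b, u s ^ 2) - 2 * (A / (b - a)) * A + (b - a) * (A / (b - a)) ^ 2
      = (∫ s in a..b, u s ^ 2) - A ^ 2 / (b - a) := by
    field_simp; ring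
  rw [h1, h2, sub_nonneg, div_le_iff₀ hL] at h0
  linarith

lemma rad_polar (s θ : ℝ) : rad (s * cos θ) (s * sin θ) = |s| := by
  rw [rad, ← Real.sqrt_sq_eq_abs]
  congr 1
  nlinarith [Real.sin_sq_add_cos_sq θ]

lemma continuous_rad : Continuous fun q : ℝ × ℝ => rad q.1 q.2 := by
  unfold rad; fun_prop

/-- Polar coordinates in the exterior region, for an integrand supported in `{|x| ≤ K}`. -/
lemma integral_regOut_polar {M K : ℝ} (hM : 0 < M) {G : ℝ × ℝ → ℝ} (hG : Continuous G)
    (hz : ∀ q : ℝ × ℝ, K ≤ rad q.1 q.2 → G q = 0) (hK : M + 1 ≤ K) :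
    ∫ q in regOut M, G q
      = ∫ θ in (-π)..π, ∫ s in (M + 1)..K, s * G (s * cos θ, s * sin θ) := by
  have hmeas : MeasurableSet (regOut M) :=
    (isClosed_le continuous_const continuous_rad).measurableSet
  have hmS : MeasurableSet (Icc (M + 1) K ×ˢ Ioo (-π) π) :=
    measurableSet_Icc.prod measurableSet_Ioo
  have hc : Continuous fun p : ℝ × ℝ => p.1 * G (p.1 * cos p.2, p.1 * sin p.2) := by fun_prop
  have hI : IntegrableOn (fun p : ℝ × ℝ => p.1 * G (p.1 * cos p.2, p.1 * sin p.2))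
      (Icc (M + 1) K ×ˢ Ioo (-π) π) (volume.prod volume) :=
    (hc.continuousOn.integrableOn_compact
      (isCompact_Icc.prod (isCompact_Icc (a := -π) (b := π)))).mono_set
      (prod_mono le_rfl Ioo_subset_Icc_self)
  have step : ∫ q in regOut M, G q
      = ∫ p in Icc (M + 1) K ×ˢ Ioo (-π) π, p.1 * G (p.1 * cos p.2, p.1 * sin p.2) := by
    rw [← integral_indicator hmeas, ← integral_comp_polarCoord_symm,
      ← integral_indicator (by
        rw [polarCoord_target]; exact measurableSet_Ioi.prod measurableSet_Ioo),
      ← integral_indicator hmS]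
    congr 1
    funext p
    obtain ⟨s, θ⟩ := p
    simp only [polarCoord_target, polarCoord_symm_apply, indicator, mem_prod, mem_Ioi, mem_Ioo,
      mem_Icc, regOut, mem_ofPred_eq, rad_polar, smul_eq_mul]
    by_cases hθ : -π < θ ∧ θ < π
    · by_cases hs : M + 1 ≤ s
      · have hs0 : 0 < s := by linarith
        rw [abs_of_pos hs0]
        by_cases hsK : s ≤ K
        · simp [hθ, hs, hs0, hsK]
        · have : G (s * cos θ, s * sin θ) = 0 :=
            hz _ (by simp only [rad_polar, abs_of_pos hs0]; linarith)
          simp [this]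
      · by_cases hs0 : 0 < s
        · rw [abs_of_pos hs0]; simp [hs]
        · simp [hs, hs0]
    · simp [hθ]
  rw [step, Measure.volume_eq_prod, ← Measure.prod_restrict,
    integral_prod_symm _ (by rwa [Measure.prod_restrict]), ← integral_Ioc_eq_integral_Ioo,
    intervalIntegral.integral_of_le (by linarith [Real.pi_pos])]
  congr 1
  funext θ
  rw [intervalIntegral.integral_of_le hK, integral_Icc_eq_integral_Ioc]

/-! ### Radial and angular estimates -/

/-- The radial estimate: integrate `∂_r h` inwards from the edge of the support, use
Cauchy–Schwarz and `r ≤ s`, then integrate over the angle. -/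
lemma radial_estimate {M K₀ K r : ℝ} (hM : 0 < M) {h : ℝ × ℝ → ℝ} (hh : ContDiff ℝ 1 h)
    (hz : ∀ q : ℝ × ℝ, K₀ < rad q.1 q.2 → h q = 0) (hKK : K₀ < K)
    (hr : M + 1 ≤ r) (hrK : r ≤ K) :
    r * ∫ θ in (-π)..π, h (r * cos θ, r * sin θ) ^ 2
      ≤ (K - r) * ((∫ q in regOut M, (fderiv ℝ h q (1, 0)) ^ 2)
          + ∫ q in regOut M, (fderiv ℝ h q (0, 1)) ^ 2) := by
  have hdc : Continuous (fderiv ℝ h) := hh.continuous_fderiv (by norm_num)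
  have hd0 : ∀ q : ℝ × ℝ, K ≤ rad q.1 q.2 → fderiv ℝ h q = 0 := by
    intro q hq
    have : h =ᶠ[nhds q] fun _ => (0 : ℝ) := by
      filter_upwards [(isOpen_lt continuous_const continuous_rad).mem_nhds
        (show K₀ < rad q.1 q.2 by linarith)] with p hp using hz p hp
    rw [this.fderiv_eq]; simp
  have hcx : Continuous fun q => (fderiv ℝ h q (1, 0)) ^ 2 := by fun_prop
  have hcy : Continuous fun q => (fderiv ℝ h q (0, 1)) ^ 2 := by fun_prop
  have hhc : Continuous h := hh.continuous
  have hpol : ∀ v : ℝ × ℝ, Continuous fun p : ℝ × ℝ =>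
      p.2 * (fderiv ℝ h (p.2 * cos p.1, p.2 * sin p.1) v) ^ 2 := fun v => by fun_prop
  have hin : ∀ v : ℝ × ℝ, Continuous fun θ : ℝ =>
      ∫ s in (M + 1)..K, s * (fderiv ℝ h (s * cos θ, s * sin θ) v) ^ 2 := fun v =>
    intervalIntegral.continuous_parametric_intervalIntegral_of_continuous' (μ := volume)
      (f := fun θ s => s * (fderiv ℝ h (s * cos θ, s * sin θ) v) ^ 2) (hpol v) _ _
  rw [integral_regOut_polar hM hcx (fun q hq => by simp [hd0 q hq]) (hr.trans hrK),
    integral_regOut_polar hM hcy (fun q hq => by simp [hd0 q hq]) (hr.trans hrK),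
    ← intervalIntegral.integral_add ((hin _).intervalIntegrable _ _)
      ((hin _).intervalIntegrable _ _),
    ← intervalIntegral.integral_const_mul, ← intervalIntegral.integral_const_mul]
  refine intervalIntegral.integral_mono_on (by linarith [Real.pi_pos])
    (Continuous.intervalIntegrable (by fun_prop) _ _)
    (Continuous.intervalIntegrable (((hin _).add (hin _)).const_mul _) _ _) ?_
  intro θ _
  -- `u` is the radial derivative of `h` along the ray of angle `θ`
  set u : ℝ → ℝ := fun s => fderiv ℝ h (s * cos θ, s * sin θ) (cos θ, sin θ) with hu
  have huc : Continuous u := by fun_prop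
  have hder : ∀ s, HasDerivAt (fun s => h (s * cos θ, s * sin θ)) (u s) s := by
    intro s
    have h1 : HasDerivAt (fun s : ℝ => (s * cos θ, s * sin θ)) (cos θ, sin θ) s :=
      (hasDerivAt_mul_const _).prodMk (hasDerivAt_mul_const _)
    exact ((hh.differentiable (by norm_num)) _).hasFDerivAt.comp_hasDerivAt s h1
  have hK0 : 0 < K := by linarith
  have hFK : h (K * cos θ, K * sin θ) = 0 :=
    hz _ (by simp only [rad_polar, abs_of_pos hK0]; exact hKK)
  have hftc := intervalIntegral.integral_eq_sub_of_hasDerivAt (a := r) (b := K)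
    (fun x _ => hder x) (huc.intervalIntegrable _ _)
  rw [hFK, zero_sub] at hftc
  have hcs := sq_integral_le hrK huc
  rw [hftc, neg_sq] at hcs
  have hle1 : r * ∫ s in r..K, u s ^ 2 ≤ ∫ s in r..K, s * u s ^ 2 := by
    rw [← intervalIntegral.integral_const_mul]
    refine intervalIntegral.integral_mono_on hrK
      (Continuous.intervalIntegrable (by fun_prop) _ _)
      (Continuous.intervalIntegrable (by fun_prop) _ _) fun s hs => ?_
    exact mul_le_mul_of_nonneg_right hs.1 (sq_nonneg _)
  have hle2 : ∫ s in r..K, s * u s ^ 2 ≤ ∫ s in (M + 1)..K, s * u s ^ 2 := by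
    refine intervalIntegral.integral_mono_interval (μ := volume) hr hrK le_rfl ?_
      (Continuous.intervalIntegrable (by fun_prop) _ _)
    filter_upwards [ae_restrict_mem measurableSet_Ioc] with s hs
    have : 0 < s := by linarith [hs.1]
    show 0 ≤ s * u s ^ 2
    positivity
  have hle3 : ∫ s in (M + 1)..K, s * u s ^ 2
      ≤ (∫ s in (M + 1)..K, s * (fderiv ℝ h (s * cos θ, s * sin θ) (1, 0)) ^ 2)
        + ∫ s in (M + 1)..K, s * (fderiv ℝ h (s * cos θ, s * sin θ) (0, 1)) ^ 2 := by
    rw [← intervalIntegral.integral_add (Continuous.intervalIntegrable (by fun_prop) _ _)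
      (Continuous.intervalIntegrable (by fun_prop) _ _)]
    refine intervalIntegral.integral_mono_on (hr.trans hrK)
      (Continuous.intervalIntegrable (by fun_prop) _ _)
      (Continuous.intervalIntegrable (by fun_prop) _ _) fun s hs => ?_
    have hs0 : 0 ≤ s := by linarith [hs.1]
    have e : u s = cos θ * fderiv ℝ h (s * cos θ, s * sin θ) (1, 0)
        + sin θ * fderiv ℝ h (s * cos θ, s * sin θ) (0, 1) := by
      have e1 : ((cos θ, sin θ) : ℝ × ℝ)
          = cos θ • ((1, 0) : ℝ × ℝ) + sin θ • ((0, 1) : ℝ × ℝ) := by simp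
      simp only [hu]
      rw [e1, map_add, map_smul, map_smul, smul_eq_mul, smul_eq_mul]
    set a := fderiv ℝ h (s * cos θ, s * sin θ) (1, 0)
    set b := fderiv ℝ h (s * cos θ, s * sin θ) (0, 1)
    rw [e, ← mul_add]
    refine mul_le_mul_of_nonneg_left ?_ hs0
    have e2 : a ^ 2 + b ^ 2 - (cos θ * a + sin θ * b) ^ 2
        = (cos θ * b - sin θ * a) ^ 2 := by
      linear_combination (-(a ^ 2 + b ^ 2)) * Real.sin_sq_add_cos_sq θ
    linarith [sq_nonneg (cos θ * b - sin θ * a)]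
  have hr0 : 0 ≤ r := by linarith
  calc r * h (r * cos θ, r * sin θ) ^ 2
      ≤ r * ((K - r) * ∫ s in r..K, u s ^ 2) := mul_le_mul_of_nonneg_left hcs hr0
    _ = (K - r) * (r * ∫ s in r..K, u s ^ 2) := by ring
    _ ≤ _ := mul_le_mul_of_nonneg_left (hle1.trans (hle2.trans hle3)) (by linarith)

/-- One-dimensional Sobolev embedding on `[-π, π]`; periodicity of `F` is not needed. -/
lemma angular_sobolev {F F' : ℝ → ℝ} (hF : ∀ θ, HasDerivAt F (F' θ) θ) (hF' : Continuous F')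
    {θ : ℝ} (hθ : θ ∈ Icc (-π) π) :
    F θ ^ 2 ≤ 1 / π * (∫ φ in (-π)..π, F φ ^ 2) + 4 * π * ∫ φ in (-π)..π, F' φ ^ 2 := by
  have hFc : Continuous F := continuous_iff_continuousAt.2 fun θ => (hF θ).continuousAt
  have hpi := Real.pi_pos
  set B := ∫ φ in (-π)..π, F' φ ^ 2 with hB
  have hsub : ∀ a b, a ∈ Icc (-π) π → b ∈ Icc (-π) π → a ≤ b → (F b - F a) ^ 2 ≤ 2 * π * B := by
    intro a b ha hb hab
    rw [← intervalIntegral.integral_eq_sub_of_hasDerivAt (fun x _ => hF x)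
      (hF'.intervalIntegrable _ _)]
    refine (sq_integral_le hab hF').trans ?_
    have h1 : ∫ s in a..b, F' s ^ 2 ≤ B :=
      intervalIntegral.integral_mono_interval (μ := volume) ha.1 hab hb.2
        (Filter.Eventually.of_forall fun s => sq_nonneg _)
        ((hF'.pow 2).intervalIntegrable _ _)
    have h2 : 0 ≤ ∫ s in a..b, F' s ^ 2 :=
      intervalIntegral.integral_nonneg hab fun s _ => sq_nonneg _
    exact mul_le_mul (by linarith [ha.1, hb.2]) h1 h2 (by positivity)
  have hpt : ∀ φ ∈ Icc (-π) π, F θ ^ 2 ≤ 2 * F φ ^ 2 + 4 * π * B := by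
    intro φ hφ
    have : (F θ - F φ) ^ 2 ≤ 2 * π * B := by
      rcases le_total φ θ with hle | hle
      · exact hsub _ _ hφ hθ hle
      · have := hsub _ _ hθ hφ hle
        nlinarith
    nlinarith [sq_nonneg (F θ - 2 * F φ)]
  have hint := intervalIntegral.integral_mono_on (μ := volume) (a := -π) (b := π) (by linarith)
    (f := fun _ => F θ ^ 2) (g := fun φ => 2 * F φ ^ 2 + 4 * π * B)
    (Continuous.intervalIntegrable (by fun_prop) _ _)
    (Continuous.intervalIntegrable (by fun_prop) _ _) hpt
  rw [intervalIntegral.integral_add (Continuous.intervalIntegrable (by fun_prop) _ _)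
    (Continuous.intervalIntegrable (by fun_prop) _ _), intervalIntegral.integral_const_mul,
    intervalIntegral.integral_const, intervalIntegral.integral_const] at hint
  simp only [smul_eq_mul] at hint
  have : F θ ^ 2 * (2 * π) ≤
      (1 / π * (∫ φ in (-π)..π, F φ ^ 2) + 4 * π * B) * (2 * π) := by
    have e : (1 / π * (∫ φ in (-π)..π, F φ ^ 2) + 4 * π * B) * (2 * π)
        = 2 * (∫ φ in (-π)..π, F φ ^ 2) + 8 * π ^ 2 * B := by field_simp; ring
    rw [e]; linarith
  exact le_of_mul_le_mul_right this (by positivity)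

/-! ### Partial derivatives and the right-hand side -/

lemma px_eq_fderiv (G : F3) (t : ℝ) (hG : Differentiable ℝ fun p : ℝ × ℝ => G t p.1 p.2)
    (u v : ℝ) : px G t u v = fderiv ℝ (fun p : ℝ × ℝ => G t p.1 p.2) (u, v) (1, 0) :=
  (HasFDerivAt.comp_hasDerivAt (f := fun s : ℝ => (s, v)) u (hG (u, v)).hasFDerivAt
    ((hasDerivAt_id u).prodMk (hasDerivAt_const u v))).deriv

lemma py_eq_fderiv (G : F3) (t : ℝ) (hG : Differentiable ℝ fun p : ℝ × ℝ => G t p.1 p.2)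
    (u v : ℝ) : py G t u v = fderiv ℝ (fun p : ℝ × ℝ => G t p.1 p.2) (u, v) (0, 1) :=
  (HasFDerivAt.comp_hasDerivAt (f := fun s : ℝ => (u, s)) v (hG (u, v)).hasFDerivAt
    ((hasDerivAt_const v u).prodMk (hasDerivAt_id v))).deriv

lemma L2nS_nonneg (S : Set (ℝ × ℝ)) (g : ℝ → ℝ → ℝ) : 0 ≤ L2nS S g := Real.sqrt_nonneg _

lemma L2nS_sq (S : Set (ℝ × ℝ)) (g : ℝ → ℝ → ℝ) :
    L2nS S g ^ 2 = ∫ q in S, (g q.1 q.2) ^ 2 :=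
  Real.sq_sqrt (integral_nonneg fun _ => sq_nonneg _)

/-- The right-hand side dominates its four terms `‖∂₁f‖`, `‖∂₂f‖`, `‖∂₁Ωf‖`, `‖∂₂Ωf‖`. -/
lemma four_terms_le (M t : ℝ) (f : F3) :
    L2nS (regOut M) (px f t) + L2nS (regOut M) (py f t)
        + L2nS (regOut M) (px (Om f) t) + L2nS (regOut M) (py (Om f) t)
      ≤ ∑ j ∈ Finset.range 2, ∑ a ∈ Finset.range (3 - j),
          ∑ w : Fin a → Fin 2, ∑ i : Fin 3,
            L2nS (regOut M)
              (fun u v => pdi i (SIter (List.ofFn w) ((Om)^[j] f)) t u v) := by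
  have key : ∀ j, L2nS (regOut M) (px (Om^[j] f) t) + L2nS (regOut M) (py (Om^[j] f) t)
      ≤ ∑ w : Fin 0 → Fin 2, ∑ i : Fin 3, L2nS (regOut M)
          (fun u v => pdi i (SIter (List.ofFn w) ((Om)^[j] f)) t u v) := by
    intro j
    rw [Fintype.sum_unique, Fin.sum_univ_three]
    have h0 := L2nS_nonneg (regOut M) (pt (Om^[j] f) t)
    simp only [List.ofFn_zero, SIter, pdi, Matrix.cons_val_zero, Matrix.cons_val_one,
      Matrix.cons_val]
    linarith
  have key2 : ∀ j ∈ Finset.range 2,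
      L2nS (regOut M) (px (Om^[j] f) t) + L2nS (regOut M) (py (Om^[j] f) t)
      ≤ ∑ a ∈ Finset.range (3 - j), ∑ w : Fin a → Fin 2, ∑ i : Fin 3, L2nS (regOut M)
          (fun u v => pdi i (SIter (List.ofFn w) ((Om)^[j] f)) t u v) := by
    intro j hj
    have hj' := Finset.mem_range.1 hj
    refine (key j).trans (Finset.single_le_sum (f := fun a => ∑ w : Fin a → Fin 2, ∑ i : Fin 3,
      L2nS (regOut M) (fun u v => pdi i (SIter (List.ofFn w) ((Om)^[j] f)) t u v))
      (fun a _ => Finset.sum_nonneg fun w _ => Finset.sum_nonneg fun i _ => L2nS_nonneg _ _)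
      (Finset.mem_range.2 (by omega)))
  refine le_trans (le_of_eq ?_) (Finset.sum_le_sum key2)
  rw [Finset.sum_range_succ, Finset.sum_range_one]
  simp only [Function.iterate_zero, Function.iterate_one, id]
  ring

/-- **Weighted pointwise estimate in the exterior region** (Lemma 3.4):
`σ^{1/2}σ₋^{−1}|f(t,x)| ≤ C Σ_{j=0}^{1} Σ_{|α|≤2−j} ‖∂∇^αΩ^j f(t,·)‖_{L²(|x|≥M+1)}`. -/
theorem weighted_pointwise_exterior (M : ℝ) (hM : 0 < M) :
    ∃ C > 0, ∀ f : F3,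
      ContDiff ℝ 2 (fun p : ℝ × ℝ × ℝ => f p.1 p.2.1 p.2.2) →
      (∀ t x y, 0 ≤ t → M + t ≤ rad x y → f t x y = 0) →
      ∀ t x y : ℝ, 0 ≤ t → M + 1 ≤ rad x y →
        Real.sqrt (1 + rad x y) * |f t x y| / sm t x y
          ≤ C * ∑ j ∈ Finset.range 2, ∑ a ∈ Finset.range (3 - j),
              ∑ w : Fin a → Fin 2, ∑ i : Fin 3,
                L2nS (regOut M)
                  (fun u v => pdi i (SIter (List.ofFn w) ((Om)^[j] f)) t u v) := by
  have hpi := Real.pi_pos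
  refine ⟨Real.sqrt (8 * π * (M + 1)), Real.sqrt_pos.2 (by positivity), ?_⟩
  intro f hf hsupp t x y ht hr
  refine le_trans ?_ (mul_le_mul_of_nonneg_left (four_terms_le M t f) (Real.sqrt_nonneg _))
  set n1 := L2nS (regOut M) (px f t) with hn1
  set n2 := L2nS (regOut M) (py f t) with hn2
  set n3 := L2nS (regOut M) (px (Om f) t) with hn3
  set n4 := L2nS (regOut M) (py (Om f) t) with hn4
  have p1 : 0 ≤ n1 := L2nS_nonneg _ _
  have p2 : 0 ≤ n2 := L2nS_nonneg _ _
  have p3 : 0 ≤ n3 := L2nS_nonneg _ _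
  have p4 : 0 ≤ n4 := L2nS_nonneg _ _
  rcases le_or_gt (M + t) (rad x y) with hout | hin
  · rw [hsupp t x y ht hout, abs_zero, mul_zero, zero_div]
    positivity
  set r := rad x y with hrdef
  have hr0 : 0 < r := by linarith
  set g : ℝ × ℝ → ℝ := fun p => f t p.1 p.2 with hg
  have hgC : ContDiff ℝ 2 g :=
    hf.comp (contDiff_const.prodMk contDiff_id : ContDiff ℝ 2 fun p : ℝ × ℝ => (t, p))
  have hgd : Differentiable ℝ g := hgC.differentiable (by norm_num)
  have hg0 : ∀ q : ℝ × ℝ, M + t < rad q.1 q.2 → g q = 0 := fun q hq => hsupp t _ _ ht hq.le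
  have hdg0 : ∀ q : ℝ × ℝ, M + t < rad q.1 q.2 → fderiv ℝ g q = 0 := by
    intro q hq
    have : g =ᶠ[nhds q] fun _ => (0 : ℝ) := by
      filter_upwards [(isOpen_lt continuous_const continuous_rad).mem_nhds hq] with p hp
        using hg0 p hp
    rw [this.fderiv_eq]; simp
  set h : ℝ × ℝ → ℝ := fun p => Om f t p.1 p.2 with hh
  have hheq : h = fun p => p.1 * fderiv ℝ g p (0, 1) - p.2 * fderiv ℝ g p (1, 0) := by
    funext p
    simp only [hh, Om, px_eq_fderiv f t hgd, py_eq_fderiv f t hgd, hg]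
  have hfd : ContDiff ℝ 1 (fderiv ℝ g) := hgC.fderiv_right (by norm_num)
  have hhC : ContDiff ℝ 1 h := by
    rw [hheq]
    exact (contDiff_fst.mul (hfd.clm_apply contDiff_const)).sub
      (contDiff_snd.mul (hfd.clm_apply contDiff_const))
  have hh0 : ∀ q : ℝ × ℝ, M + t < rad q.1 q.2 → h q = 0 := by
    intro q hq
    simp [hheq, hdg0 q hq]
  have hhd : Differentiable ℝ h := hhC.differentiable (by norm_num)
  have q1 : ∫ q in regOut M, (fderiv ℝ g q (1, 0)) ^ 2 = n1 ^ 2 := by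
    rw [hn1, L2nS_sq]; simp only [px_eq_fderiv f t hgd, hg]
  have q2 : ∫ q in regOut M, (fderiv ℝ g q (0, 1)) ^ 2 = n2 ^ 2 := by
    rw [hn2, L2nS_sq]; simp only [py_eq_fderiv f t hgd, hg]
  have q3 : ∫ q in regOut M, (fderiv ℝ h q (1, 0)) ^ 2 = n3 ^ 2 := by
    rw [hn3, L2nS_sq]; simp only [px_eq_fderiv (Om f) t hhd, hh]
  have q4 : ∫ q in regOut M, (fderiv ℝ h q (0, 1)) ^ 2 = n4 ^ 2 := by
    rw [hn4, L2nS_sq]; simp only [py_eq_fderiv (Om f) t hhd, hh]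
  -- the outer radius exceeds `M + t`, so that `Ωf` and all derivatives vanish beyond it
  have r1 := radial_estimate hM (hgC.of_le (by norm_num)) hg0
    (lt_add_one (M + t)) hr (by linarith)
  have r2 := radial_estimate hM hhC hh0 (lt_add_one (M + t)) hr (by linarith)
  rw [q1, q2] at r1
  rw [q3, q4] at r2
  -- polar angle of `(x, y)`
  obtain ⟨θ, hθ, hx, hy⟩ : ∃ θ ∈ Icc (-π) π, x = r * cos θ ∧ y = r * sin θ := by
    have hnorm : ‖(⟨x, y⟩ : ℂ)‖ = r := by
      rw [hrdef, rad, Complex.norm_eq_sqrt_sq_add_sq]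
    refine ⟨Complex.arg ⟨x, y⟩, ⟨(Complex.neg_pi_lt_arg _).le, Complex.arg_le_pi _⟩, ?_, ?_⟩
    · rw [← hnorm, Complex.norm_mul_cos_arg]
    · rw [← hnorm, Complex.norm_mul_sin_arg]
  have hFder : ∀ φ, HasDerivAt (fun φ => g (r * cos φ, r * sin φ))
      (h (r * cos φ, r * sin φ)) φ := by
    intro φ
    have h1 : HasDerivAt (fun φ : ℝ => (r * cos φ, r * sin φ)) (r * -sin φ, r * cos φ) φ :=
      ((Real.hasDerivAt_cos φ).const_mul r).prodMk ((Real.hasDerivAt_sin φ).const_mul r)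
    have h2 := (hgd _).hasFDerivAt.comp_hasDerivAt φ h1
    refine h2.congr_deriv ?_
    have e : ((r * -sin φ, r * cos φ) : ℝ × ℝ)
        = (r * cos φ) • ((0, 1) : ℝ × ℝ) - (r * sin φ) • ((1, 0) : ℝ × ℝ) := by simp
    rw [e, map_sub, map_smul, map_smul, hheq]
    simp only [smul_eq_mul]
  have hhc : Continuous h := hhC.continuous
  have hsob := angular_sobolev hFder (by fun_prop) hθ
  simp only [← hx, ← hy] at hsob
  set A := ∫ φ in (-π)..π, g (r * cos φ, r * sin φ) ^ 2
  set B := ∫ φ in (-π)..π, h (r * cos φ, r * sin φ) ^ 2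
  have hsm1 : 1 ≤ sm t x y := by unfold sm; linarith [abs_nonneg (t - rad x y)]
  have hgap : M + t + 1 - r ≤ (M + 1) * sm t x y ^ 2 := by
    have a1 : t - r ≤ sm t x y - 1 := by
      unfold sm; linarith [le_abs_self (t - rad x y)]
    nlinarith [mul_nonneg hM.le (sub_nonneg.2 hsm1)]
  have hgap0 : 0 ≤ M + t + 1 - r := by linarith
  set S := n1 + n2 + n3 + n4 with hS
  have hpi1 : 1 / π ≤ 4 * π := by
    rw [div_le_iff₀ hpi]; nlinarith [Real.pi_gt_three]
  have hSS : n1 ^ 2 + n2 ^ 2 + (n3 ^ 2 + n4 ^ 2) ≤ S ^ 2 := by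
    have : 0 ≤ n1 * n2 + n1 * n3 + n1 * n4 + n2 * n3 + n2 * n4 + n3 * n4 := by positivity
    rw [hS]; nlinarith
  have hmain : r * g (x, y) ^ 2 ≤ 4 * π * (M + 1) * sm t x y ^ 2 * S ^ 2 := by
    calc r * g (x, y) ^ 2 ≤ r * (1 / π * A + 4 * π * B) :=
          mul_le_mul_of_nonneg_left hsob hr0.le
      _ = 1 / π * (r * A) + 4 * π * (r * B) := by ring
      _ ≤ 1 / π * ((M + t + 1 - r) * (n1 ^ 2 + n2 ^ 2))
          + 4 * π * ((M + t + 1 - r) * (n3 ^ 2 + n4 ^ 2)) := by gcongr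
      _ ≤ 4 * π * ((M + t + 1 - r) * (n1 ^ 2 + n2 ^ 2))
          + 4 * π * ((M + t + 1 - r) * (n3 ^ 2 + n4 ^ 2)) := by gcongr
      _ = 4 * π * ((M + t + 1 - r) * (n1 ^ 2 + n2 ^ 2 + (n3 ^ 2 + n4 ^ 2))) := by ring
      _ ≤ 4 * π * (((M + 1) * sm t x y ^ 2) * S ^ 2) := by gcongr
      _ = _ := by ring
  have hsm0 : 0 < sm t x y := by linarith
  have hS0 : 0 ≤ S := by positivity
  rw [div_le_iff₀ hsm0]
  refine abs_le_of_sq_le_sq' ?_ (by positivity) |>.2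
  rw [mul_pow, mul_pow, mul_pow, Real.sq_sqrt (by positivity), Real.sq_sqrt (by positivity),
    sq_abs]
  have hlast : (1 + r) * f t x y ^ 2 ≤ 2 * (r * f t x y ^ 2) := by
    rw [← mul_assoc]
    exact mul_le_mul_of_nonneg_right (by linarith) (sq_nonneg _)
  calc (1 + r) * f t x y ^ 2 ≤ 2 * (r * f t x y ^ 2) := hlast
    _ ≤ 2 * (4 * π * (M + 1) * sm t x y ^ 2 * S ^ 2) :=
        mul_le_mul_of_nonneg_left hmain zero_le_two
    _ = _ := by ring

end
end

section
/- Assume g_i^{jk} ∈ ℝ for 0 ≤ i,j,k ≤ 2 with g_i^{jk} = g_i^{kj}, and Σ_{i,j,k=0}^2 g_i^{jk} p_i p_j p_k = 0 for every p = (p₀,p₁,p₂) ∈ ℝ³ satisfying p₀² = p₁² + p₂². Then for every pair of multi-indices α, β (over the fields Γ) there is a constant C > 0 such that for every smooth function φ̇ on (0,∞)×(ℝ²∖{0}) that is radially symmetric in x (φ̇(t,x) = ψ(t,|x|)), and every t > 0, x ≠ 0: |Σ_{i,j,k=0}^2 g_i^{jk}(∂_iΓ^αφ̇ ∂²_{jk}Γ^βφ̇)(t,x)|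 ≤ (C/t)( Σ_{|p|≤|α|, |q|≤|β|} |(σ₋ Γ^p∂φ̇ · ∂Γ^q∂φ̇)(t,x)| + Σ_{|p|≤|α|+1, |q|≤|β|} |(Γ^pφ̇ · ∂Γ^q∂φ̇)(t,x)| + Σ_{|p|≤|α|, |q|≤|β|+1} |(Γ^p∂φ̇ · Γ^q∂φ̇)(t,x)| ). -/
/-!
Write `ω = x / |x|`. Since `(-1, ω)` is a null covector, substituting
`∂_i = -p_i ∂_t + Z_i` with `p = (-1, ω)` and `Z_i = ∂_i + ω_i ∂_t` (so `Z_0 = 0`) in the null form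
leaves only terms containing a good derivative `Z_i u` or `Z_j ∂_k v` (`null_alg`; the symmetry of
second derivatives is used). From `t (∂_t + ∂_r) = X + (t - r) ∂_r` and
`∂_i = ω_i ∂_r + O(1/r) Ω` one gets, when `t ≤ 2 r`,
`t |Z_i u| ≤ |X u| + 2 σ₋ |∂u| + 2 |Ω u|` (`good_deriv`). When `t ≥ 2 r` there is nothing to
cancel, because `t ≤ 2 σ₋` (both cases: `null_bound`).

It remains to rewrite `∂_i Γ^α φ`, `Ω Γ^α φ` and `Ω ∂_k Γ^β φ` as constant-coefficient combinations
of the words that occur on the right-hand side (`rep_pdi`, `rep_Om`, `rep_Om_pdi`). The commutators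
of `∂_i` and `Ω` with the fields of `Γ` are combinations of `∂_t, ∂_1, ∂_2`, and `Ω φ = 0` for
radial `φ`; so moving `∂_i` or `Ω` past a word does not increase the length of the words. The
predicate `WordRep` expresses being such a combination, with coefficients independent of `φ`, and
`WordRep.bound` extracts the resulting pointwise bound.
-/

noncomputable section

open Real MeasureTheory Set

set_option linter.unusedVariables false

open scoped Topology

/-! ### Smooth functions and local linear operators -/

/-- The open region `t > 0`, `x ≠ 0`. -/
def US : Set (ℝ × ℝ × ℝ) := {p | 0 < p.1 ∧ (p.2.1, p.2.2) ≠ ((0 : ℝ), (0 : ℝ))}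

/-- Uncurried form of a function of `(t, x, y)`. -/
def unc (f : F3) : ℝ × ℝ × ℝ → ℝ := fun p => f p.1 p.2.1 p.2.2

/-- Smoothness on the region `US`. -/
def Sm (f : F3) : Prop := ContDiffOn ℝ (⊤ : ℕ∞) (unc f) US

/-- Equality on the region `US`. -/
def EqU (f g : F3) : Prop := ∀ t x y, (t, x, y) ∈ US → f t x y = g t x y

/-- The standard basis of space-time. -/
def ev : Fin 3 → ℝ × ℝ × ℝ := ![(1, 0, 0), (0, 1, 0), (0, 0, 1)]

/-- The coordinate functions `t, x, y`. -/
def co : Fin 3 → F3 := ![fun t _ _ => t, fun _ x _ => x, fun _ _ y => y]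

lemma isOpen_US : IsOpen US := by
  have h1 : IsOpen {p : ℝ × ℝ × ℝ | 0 < p.1} := isOpen_lt continuous_const continuous_fst
  have h2 : IsOpen {p : ℝ × ℝ × ℝ | (p.2.1, p.2.2) ≠ ((0 : ℝ), (0 : ℝ))} :=
    isOpen_ne_fun (by fun_prop) continuous_const
  exact h1.inter h2

lemma Sm.contDiffAt {f : F3} (hf : Sm f) {p : ℝ × ℝ × ℝ} (hp : p ∈ US) :
    ContDiffAt ℝ (⊤ : ℕ∞) (unc f) p :=
  ContDiffOn.contDiffAt hf (isOpen_US.mem_nhds hp)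

lemma Sm.differentiableAt {f : F3} (hf : Sm f) {p : ℝ × ℝ × ℝ} (hp : p ∈ US) :
    DifferentiableAt ℝ (unc f) p := (hf.contDiffAt hp).differentiableAt (by simp)

lemma pdi_eq {f : F3} (hf : Sm f) (i : Fin 3) {t x y : ℝ} (hp : (t, x, y) ∈ US) :
    pdi i f t x y = fderiv ℝ (unc f) (t, x, y) (ev i) := by
  have hd := (hf.differentiableAt hp).hasFDerivAt
  fin_cases i
  · have hc : HasDerivAt (fun s : ℝ => ((s, x, y) : ℝ × ℝ × ℝ)) (1, 0, 0) t :=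
      (hasDerivAt_id t).prodMk ((hasDerivAt_const t x).prodMk (hasDerivAt_const t y))
    exact (hd.comp_hasDerivAt t hc).deriv
  · have hc : HasDerivAt (fun s : ℝ => ((t, s, y) : ℝ × ℝ × ℝ)) (0, 1, 0) x :=
      (hasDerivAt_const x t).prodMk ((hasDerivAt_id x).prodMk (hasDerivAt_const x y))
    exact (hd.comp_hasDerivAt x hc).deriv
  · have hc : HasDerivAt (fun s : ℝ => ((t, x, s) : ℝ × ℝ × ℝ)) (0, 0, 1) y :=
      (hasDerivAt_const y t).prodMk ((hasDerivAt_const y x).prodMk (hasDerivAt_id y))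
    exact (hd.comp_hasDerivAt y hc).deriv

lemma Sm.congr {f g : F3} (hf : Sm f) (h : EqU f g) : Sm g :=
  ContDiffOn.congr hf fun p hp => (h p.1 p.2.1 p.2.2 hp).symm

lemma Sm.add {f g : F3} (hf : Sm f) (hg : Sm g) : Sm (f + g) := ContDiffOn.add hf hg

lemma Sm.mul {f g : F3} (hf : Sm f) (hg : Sm g) : Sm (f * g) := ContDiffOn.mul hf hg

lemma Sm.smul {f : F3} (c : ℝ) (hf : Sm f) : Sm (c • f) := ContDiffOn.const_smul c hf

lemma sm_co (i : Fin 3) : Sm (co i) := by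
  fin_cases i
  · exact contDiff_fst.contDiffOn
  · exact (contDiff_fst.comp contDiff_snd).contDiffOn
  · exact (contDiff_snd.comp contDiff_snd).contDiffOn

/-- A local linear operator on functions smooth on `US`. -/
structure LocLin (D : F3 → F3) : Prop where
  sm : ∀ {f}, Sm f → Sm (D f)
  congr : ∀ {f g}, Sm f → EqU f g → EqU (D f) (D g)
  add : ∀ {f g}, Sm f → Sm g → EqU (D (f + g)) (D f + D g)
  smul : ∀ (c : ℝ) {f}, Sm f → EqU (D (c • f)) (c • D f)

lemma locLin_id : LocLin (fun f => f) :=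
  ⟨fun h => h, fun _ h => h, fun _ _ _ _ _ _ => rfl, fun _ _ _ _ _ _ _ => rfl⟩

lemma locLin_pdi (i : Fin 3) : LocLin (pdi i) where
  sm {f} hf := by
    have h1 : ContDiffOn ℝ (⊤ : ℕ∞) (fun p => fderiv ℝ (unc f) p (ev i)) US :=
      (ContDiffOn.fderiv_of_isOpen hf isOpen_US (by simp)).clm_apply contDiffOn_const
    exact h1.congr fun p hp => pdi_eq hf i hp
  congr {f g} hf h t x y hp := by
    rw [pdi_eq hf i hp, pdi_eq (hf.congr h) i hp]
    have : unc f =ᶠ[nhds (t, x, y)] unc g := by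
      filter_upwards [isOpen_US.mem_nhds hp] with p hp using h p.1 p.2.1 p.2.2 hp
    rw [this.fderiv_eq]
  add {f g} hf hg t x y hp := by
    rw [pdi_eq (hf.add hg) i hp, Pi.add_apply, Pi.add_apply, Pi.add_apply, pdi_eq hf i hp,
      pdi_eq hg i hp]
    have : unc (f + g) = unc f + unc g := rfl
    rw [this, fderiv_add (hf.differentiableAt hp) (hg.differentiableAt hp)]; rfl
  smul c {f} hf t x y hp := by
    rw [pdi_eq (hf.smul c) i hp, Pi.smul_apply, Pi.smul_apply, Pi.smul_apply, pdi_eq hf i hp]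
    have : unc (c • f) = c • unc f := rfl
    rw [this, fderiv_const_smul (hf.differentiableAt hp)]; rfl

lemma LocLin.addOp {D E : F3 → F3} (hD : LocLin D) (hE : LocLin E) :
    LocLin (fun f => D f + E f) where
  sm hf := (hD.sm hf).add (hE.sm hf)
  congr hf h t x y hp := congrArg₂ (· + ·) (hD.congr hf h t x y hp) (hE.congr hf h t x y hp)
  add hf hg t x y hp := by
    have h1 := hD.add hf hg t x y hp
    have h2 := hE.add hf hg t x y hp
    simp only [Pi.add_apply] at *
    rw [h1, h2]; ring
  smul c f hf t x y hp := by
    have h1 := hD.smul c hf t x y hp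
    have h2 := hE.smul c hf t x y hp
    simp only [Pi.add_apply, Pi.smul_apply, smul_eq_mul] at *
    rw [h1, h2]; ring

lemma LocLin.mulOp {D : F3 → F3} (hD : LocLin D) {c : F3} (hc : Sm c) :
    LocLin (fun f => c * D f) where
  sm hf := hc.mul (hD.sm hf)
  congr hf h t x y hp := congrArg (c t x y * ·) (hD.congr hf h t x y hp)
  add hf hg t x y hp := by
    have h1 := hD.add hf hg t x y hp
    simp only [Pi.add_apply, Pi.mul_apply] at *
    rw [h1]; ring
  smul a f hf t x y hp := by
    have h1 := hD.smul a hf t x y hp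
    simp only [Pi.mul_apply, Pi.smul_apply, smul_eq_mul] at *
    rw [h1]; ring

lemma LocLin.comp {D E : F3 → F3} (hD : LocLin D) (hE : LocLin E) :
    LocLin (fun f => D (E f)) where
  sm hf := hD.sm (hE.sm hf)
  congr hf h := hD.congr (hE.sm hf) (hE.congr hf h)
  add hf hg t x y hp := (hD.congr (hE.sm (hf.add hg)) (hE.add hf hg) t x y hp).trans
    (hD.add (hE.sm hf) (hE.sm hg) t x y hp)
  smul c f hf t x y hp := (hD.congr (hE.sm (hf.smul c)) (hE.smul c hf) t x y hp).trans
    (hD.smul c (hE.sm hf) t x y hp)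

lemma Xf_eq : Xf = fun f => (co 0 * pdi 0 f + co 1 * pdi 1 f) + co 2 * pdi 2 f := rfl

lemma Om_eq : Om = fun f => co 1 * pdi 2 f + ((-1 : ℝ) • co 2) * pdi 1 f := by
  funext f t x y
  change x * py f t x y - y * px f t x y = x * py f t x y + (-1 * y) * px f t x y
  ring

lemma locLin_Xf : LocLin Xf := by
  rw [Xf_eq]
  exact (((locLin_pdi 0).mulOp (sm_co 0)).addOp ((locLin_pdi 1).mulOp (sm_co 1))).addOp
    ((locLin_pdi 2).mulOp (sm_co 2))

lemma locLin_Om : LocLin Om := by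
  rw [Om_eq]
  exact ((locLin_pdi 2).mulOp (sm_co 1)).addOp ((locLin_pdi 1).mulOp ((sm_co 2).smul _))

lemma locLin_GammaF (a : Fin 4) : LocLin (GammaF a) := by
  fin_cases a
  · exact locLin_pdi 0
  · exact locLin_pdi 1
  · exact locLin_pdi 2
  · exact locLin_Xf

lemma locLin_GIter (w : List (Fin 4)) : LocLin (GIter w) := by
  induction w with
  | nil => exact locLin_id
  | cons a w ih => exact (locLin_GammaF a).comp ih

/-! ### Commutators -/

lemma pdi_comm (i j : Fin 3) {f : F3} (hf : Sm f) :
    EqU (pdi i (pdi j f)) (pdi j (pdi i f)) := by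
  have key : ∀ i j : Fin 3, ∀ t x y, (t, x, y) ∈ US → pdi i (pdi j f) t x y =
      fderiv ℝ (fderiv ℝ (unc f)) (t, x, y) (ev i) (ev j) := by
    intro i j t x y hp
    rw [pdi_eq ((locLin_pdi j).sm hf) i hp]
    have h1 : unc (pdi j f) =ᶠ[nhds (t, x, y)] fun p => fderiv ℝ (unc f) p (ev j) := by
      filter_upwards [isOpen_US.mem_nhds hp] with p hp using pdi_eq hf j hp
    have h2 : DifferentiableAt ℝ (fderiv ℝ (unc f)) (t, x, y) :=
      ((hf.contDiffAt hp).fderiv_right (m := 1) (by norm_cast)).differentiableAt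
        one_ne_zero
    rw [h1.fderiv_eq, fderiv_clm_apply h2 (differentiableAt_const _)]
    simp
  intro t x y hp
  rw [key i j t x y hp, key j i t x y hp]
  exact ((hf.contDiffAt hp).isSymmSndFDerivAt (by simp; norm_cast)) _ _

lemma pdi_mul (i : Fin 3) {f g : F3} (hf : Sm f) (hg : Sm g) :
    EqU (pdi i (f * g)) (pdi i f * g + f * pdi i g) := by
  intro t x y hp
  simp only [Pi.add_apply, Pi.mul_apply]
  rw [pdi_eq (hf.mul hg) i hp, pdi_eq hf i hp, pdi_eq hg i hp]
  have : unc (f * g) = unc f * unc g := rfl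
  rw [this, fderiv_mul (hf.differentiableAt hp) (hg.differentiableAt hp)]
  simp [unc]; ring

lemma pdi_co (i j : Fin 3) (t x y : ℝ) : pdi i (co j) t x y = if i = j then 1 else 0 := by
  fin_cases i <;> fin_cases j <;> simp [pdi, co, pt, px, py]

lemma pdi_co_mul (i j k : Fin 3) {f : F3} (hf : Sm f) {t x y : ℝ} (hp : (t, x, y) ∈ US) :
    pdi i (co j * pdi k f) t x y =
      (if i = j then 1 else 0) * pdi k f t x y + co j t x y * pdi i (pdi k f) t x y := by
  rw [pdi_mul i (sm_co j) ((locLin_pdi k).sm hf) t x y hp]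
  simp only [Pi.add_apply, Pi.mul_apply, pdi_co]

lemma pdi_Xf (i : Fin 3) {f : F3} (hf : Sm f) :
    EqU (pdi i (Xf f)) (Xf (pdi i f) + pdi i f) := by
  intro t x y hp
  have s : ∀ j, Sm (co j * pdi j f) := fun j => (sm_co j).mul ((locLin_pdi j).sm hf)
  rw [Xf_eq]
  simp only []
  rw [(locLin_pdi i).add ((s 0).add (s 1)) (s 2) t x y hp]
  simp only [Pi.add_apply]
  rw [(locLin_pdi i).add (s 0) (s 1) t x y hp]
  simp only [Pi.add_apply, Pi.mul_apply]
  rw [pdi_co_mul i 0 0 hf hp, pdi_co_mul i 1 1 hf hp, pdi_co_mul i 2 2 hf hp,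
    pdi_comm i 0 hf t x y hp, pdi_comm i 1 hf t x y hp, pdi_comm i 2 hf t x y hp]
  fin_cases i <;> simp <;> ring

/-- The coefficients of `[∂_i, Ω] = Σ_j rotC i j ∂_j`. -/
def rotC : Fin 3 → Fin 3 → ℝ := ![![0, 0, 0], ![0, 0, 1], ![0, -1, 0]]

lemma pdi_Om (i : Fin 3) {f : F3} (hf : Sm f) {t x y : ℝ} (hp : (t, x, y) ∈ US) :
    pdi i (Om f) t x y = Om (pdi i f) t x y + ∑ j, rotC i j * pdi j f t x y := by
  have s : ∀ j k, Sm (co j * pdi k f) := fun j k => (sm_co j).mul ((locLin_pdi k).sm hf)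
  have e : Om f = co 1 * pdi 2 f + (-1 : ℝ) • (co 2 * pdi 1 f) := by
    rw [Om_eq]; simp only [smul_mul_assoc]
  rw [e, (locLin_pdi i).add (s 1 2) ((s 2 1).smul _) t x y hp]
  simp only [Pi.add_apply]
  rw [(locLin_pdi i).smul _ (s 2 1) t x y hp]
  simp only [Pi.smul_apply, smul_eq_mul]
  rw [pdi_co_mul i 1 2 hf hp, pdi_co_mul i 2 1 hf hp,
    pdi_comm i 1 hf t x y hp, pdi_comm i 2 hf t x y hp, Om_eq]
  fin_cases i <;> simp [rotC, Fin.sum_univ_three] <;> ring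

lemma Om_Xf {f : F3} (hf : Sm f) : EqU (Om (Xf f)) (Xf (Om f)) := by
  intro t x y hp
  have e : ∀ g : F3, Om g t x y = co 1 t x y * pdi 2 g t x y - co 2 t x y * pdi 1 g t x y :=
    fun g => rfl
  have e' : ∀ g : F3, Xf g t x y = co 0 t x y * pdi 0 g t x y + co 1 t x y * pdi 1 g t x y
    + co 2 t x y * pdi 2 g t x y := fun g => rfl
  rw [e, pdi_Xf 1 hf t x y hp, pdi_Xf 2 hf t x y hp]
  simp only [Pi.add_apply]
  rw [e' (Om f), pdi_Om 0 hf hp, pdi_Om 1 hf hp, pdi_Om 2 hf hp, e', e', e, e, e,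
    pdi_comm 2 0 hf t x y hp, pdi_comm 1 0 hf t x y hp, pdi_comm 2 1 hf t x y hp]
  simp [rotC, Fin.sum_univ_three]; ring

lemma Om_radial {f : F3} (hf : Sm f) (hr : RadialF f) {t x y : ℝ} (hp : (t, x, y) ∈ US) :
    Om f t x y = 0 := by
  have hc : HasDerivAt (fun s : ℝ => ((t, x * cos s - y * sin s, x * sin s + y * cos s) : ℝ × ℝ × ℝ))
      (0, -y, x) 0 := by
    refine (hasDerivAt_const 0 t).prodMk (HasDerivAt.prodMk ?_ ?_)
    · simpa [Pi.sub_def] using ((hasDerivAt_cos 0).const_mul x).sub ((hasDerivAt_sin 0).const_mul y)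
    · simpa [Pi.add_def] using ((hasDerivAt_sin 0).const_mul x).add ((hasDerivAt_cos 0).const_mul y)
  have hd : HasFDerivAt (unc f) (fderiv ℝ (unc f) (t, x, y))
      (t, x * cos 0 - y * sin 0, x * sin 0 + y * cos 0) := by
    simpa using (hf.differentiableAt hp).hasFDerivAt
  have h1 := hd.comp_hasDerivAt 0 hc
  -- the orbit of `(x, y)` under rotations stays on a circle, where `f` is constant
  have h2 : (unc f ∘ fun s : ℝ => ((t, x * cos s - y * sin s, x * sin s + y * cos s) : ℝ × ℝ × ℝ))
      = fun _ => f t x y := by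
    funext s
    apply hr
    unfold rad
    congr 1
    linear_combination (x ^ 2 + y ^ 2) * sin_sq_add_cos_sq s
  rw [h2] at h1
  have h3 := h1.unique (hasDerivAt_const 0 _)
  have h4 : ((0, -y, x) : ℝ × ℝ × ℝ) = x • ev 2 - y • ev 1 := by simp [ev]
  rw [h4, map_sub, map_smul, map_smul, ← pdi_eq hf 2 hp, ← pdi_eq hf 1 hp] at h3
  exact h3

/-! ### Linear combinations of words -/

/-- `WordRep B n T`: on smooth radial functions and on `US`, the operator `T` is a linear combination
with constant coefficients of operators `Γ^w B_j` with `|w| ≤ n`. -/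
inductive WordRep {ι : Type} (B : ι → F3 → F3) (n : ℕ) : (F3 → F3) → Prop
  | word (w : List (Fin 4)) (hw : w.length ≤ n) (j : ι) : WordRep B n (fun φ => GIter w (B j φ))
  | add {T S : F3 → F3} (hT : WordRep B n T) (hS : WordRep B n S) : WordRep B n (fun φ => T φ + S φ)
  | smul {T : F3 → F3} (c : ℝ) (hT : WordRep B n T) : WordRep B n (fun φ => c • T φ)
  | congr {T S : F3 → F3} (hT : WordRep B n T)
      (h : ∀ φ, Sm φ → RadialF φ → EqU (T φ) (S φ)) : WordRep B n S

section
variable {ι κ : Type} {B : ι → F3 → F3} {B' : κ → F3 → F3} {n m : ℕ} {T : F3 → F3}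

lemma WordRep.mono (h : WordRep B n T) (hnm : n ≤ m) : WordRep B m T := by
  induction h with
  | word w hw j => exact .word w (hw.trans hnm) j
  | add _ _ h1 h2 => exact .add h1 h2
  | smul c _ h => exact .smul c h
  | congr _ h ih => exact .congr ih h

lemma WordRep.sm (h : WordRep B n T) (hB : ∀ j, LocLin (B j)) {φ : F3} (hφ : Sm φ) (hr : RadialF φ) :
    Sm (T φ) := by
  induction h with
  | word w hw j => exact (locLin_GIter w).sm ((hB j).sm hφ)
  | add _ _ h1 h2 => exact h1.add h2
  | smul c _ h => exact h.smul c
  | congr _ h ih => exact ih.congr (h φ hφ hr)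

/-- To rewrite `D ∘ T` for a local linear `D`, it suffices to rewrite `D` applied to words. -/
lemma WordRep.map (h : WordRep B n T) (hB : ∀ j, LocLin (B j)) {D : F3 → F3} (hD : LocLin D)
    (hw : ∀ w : List (Fin 4), w.length ≤ n → ∀ j, WordRep B' m (fun φ => D (GIter w (B j φ)))) :
    WordRep B' m (fun φ => D (T φ)) := by
  induction h with
  | word w hw' j => exact hw w hw' j
  | add h1 h2 ih1 ih2 =>
    exact (ih1.add ih2).congr fun φ hφ hr t x y hp =>
      (hD.add (h1.sm hB hφ hr) (h2.sm hB hφ hr) t x y hp).symm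
  | smul c h ih =>
    exact (ih.smul c).congr fun φ hφ hr t x y hp => (hD.smul c (h.sm hB hφ hr) t x y hp).symm
  | congr h e ih =>
    exact ih.congr fun φ hφ hr => hD.congr (h.sm hB hφ hr) (e φ hφ hr)

lemma WordRep.gam (h : WordRep B n T) (hB : ∀ j, LocLin (B j)) (a : Fin 4) :
    WordRep B (n + 1) (fun φ => GammaF a (T φ)) :=
  h.map hB (locLin_GammaF a) fun w hw j => .word (a :: w) (by simpa using hw) j

/-- The sum of `|D Γ^w B_j φ|` over the words of length at most `n` and over `j`. -/
def MS [Fintype ι] (B : ι → F3 → F3) (D : F3 → F3) (n : ℕ) (φ : F3) (t x y : ℝ) : ℝ :=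
  ∑ b ∈ Finset.range (n + 1), ∑ w : Fin b → Fin 4, ∑ j, |D (GIter (List.ofFn w) (B j φ)) t x y|

lemma MS_nonneg [Fintype ι] (D : F3 → F3) (φ : F3) (t x y : ℝ) : 0 ≤ MS B D n φ t x y := by
  unfold MS; positivity

lemma WordRep.bound [Fintype ι] (h : WordRep B n T) (hB : ∀ j, LocLin (B j)) {D : F3 → F3}
    (hD : LocLin D) : ∃ C, 0 ≤ C ∧ ∀ φ, Sm φ → RadialF φ → ∀ t x y, (t, x, y) ∈ US →
      |D (T φ) t x y| ≤ C * MS B D n φ t x y := by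
  induction h with
  | word w hw j =>
    refine ⟨1, zero_le_one, fun φ _ _ t x y _ => ?_⟩
    rw [one_mul, MS]
    have h1 : |D (GIter w (B j φ)) t x y| ≤ ∑ j, |D (GIter (List.ofFn w.get) (B j φ)) t x y| := by
      rw [List.ofFn_get]
      exact Finset.single_le_sum (f := fun j => |D (GIter w (B j φ)) t x y|)
        (fun _ _ => abs_nonneg _) (Finset.mem_univ j)
    refine h1.trans ?_
    refine le_trans ?_ (Finset.single_le_sum
      (f := fun b => ∑ w : Fin b → Fin 4, ∑ j, |D (GIter (List.ofFn w) (B j φ)) t x y|)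
      (fun _ _ => by positivity) (Finset.mem_range.2 (Nat.lt_succ_of_le hw)))
    exact Finset.single_le_sum
      (f := fun w' : Fin w.length → Fin 4 => ∑ j, |D (GIter (List.ofFn w') (B j φ)) t x y|)
      (fun _ _ => by positivity) (Finset.mem_univ w.get)
  | add h1 h2 ih1 ih2 =>
    obtain ⟨C1, hC1, b1⟩ := ih1
    obtain ⟨C2, hC2, b2⟩ := ih2
    refine ⟨C1 + C2, by positivity, fun φ hφ hr t x y hp => ?_⟩
    rw [hD.add (h1.sm hB hφ hr) (h2.sm hB hφ hr) t x y hp, add_mul]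
    exact (abs_add_le _ _).trans (add_le_add (b1 φ hφ hr t x y hp) (b2 φ hφ hr t x y hp))
  | smul c h ih =>
    obtain ⟨C1, hC1, b1⟩ := ih
    refine ⟨|c| * C1, by positivity, fun φ hφ hr t x y hp => ?_⟩
    rw [hD.smul c (h.sm hB hφ hr) t x y hp, mul_assoc]
    simp only [Pi.smul_apply, smul_eq_mul, abs_mul]
    exact mul_le_mul_of_nonneg_left (b1 φ hφ hr t x y hp) (abs_nonneg c)
  | congr h e ih =>
    obtain ⟨C1, hC1, b1⟩ := ih
    refine ⟨C1, hC1, fun φ hφ hr t x y hp => ?_⟩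
    rw [← hD.congr (h.sm hB hφ hr) (e φ hφ hr) t x y hp]
    exact b1 φ hφ hr t x y hp

end

/-- The one-element family consisting of the identity operator. -/
def BI : Unit → F3 → F3 := fun _ f => f

lemma locLin_BI (j : Unit) : LocLin (BI j) := locLin_id

/-- `[∂_i, Γ_a]` is either `0` or `∂_i`. -/
lemma pdi_GammaF (i : Fin 3) (a : Fin 4) : ∃ c : ℝ, ∀ f, Sm f →
    EqU (pdi i (GammaF a f)) (GammaF a (pdi i f) + c • pdi i f) := by
  fin_cases a
  · exact ⟨0, fun f hf => by rw [zero_smul, add_zero]; exact pdi_comm i 0 hf⟩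
  · exact ⟨0, fun f hf => by rw [zero_smul, add_zero]; exact pdi_comm i 1 hf⟩
  · exact ⟨0, fun f hf => by rw [zero_smul, add_zero]; exact pdi_comm i 2 hf⟩
  · exact ⟨1, fun f hf => by rw [one_smul]; exact pdi_Xf i hf⟩

lemma rep_pdi (i : Fin 3) (w : List (Fin 4)) : WordRep pdi w.length (fun φ => pdi i (GIter w φ)) := by
  induction w with
  | nil => exact .word [] le_rfl i
  | cons a w ih =>
    obtain ⟨c, hc⟩ := pdi_GammaF i a
    refine ((ih.gam locLin_pdi a).add ((ih.mono (Nat.le_succ _)).smul c)).congr ?_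
    intro φ hφ _ t x y hp
    exact (hc _ ((locLin_GIter w).sm hφ) t x y hp).symm

/-- The commutator `[Ω, Γ_a]` is a constant-coefficient combination of `∂_t, ∂_1, ∂_2`. -/
lemma Om_GammaF (a : Fin 4) : ∃ c : Fin 3 → ℝ, ∀ f, Sm f → ∀ t x y, (t, x, y) ∈ US →
    Om (GammaF a f) t x y = GammaF a (Om f) t x y + ∑ j, c j * pdi j f t x y := by
  have key : ∀ i, ∃ c : Fin 3 → ℝ, ∀ f, Sm f → ∀ t x y, (t, x, y) ∈ US →
      Om (pdi i f) t x y = pdi i (Om f) t x y + ∑ j, c j * pdi j f t x y := fun i =>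
    ⟨fun j => - rotC i j, fun f hf t x y hp => by
      rw [pdi_Om i hf hp]; simp [Finset.sum_neg_distrib]⟩
  fin_cases a
  · exact key 0
  · exact key 1
  · exact key 2
  · exact ⟨0, fun f hf t x y hp => by
      simp only [Pi.zero_apply, zero_mul, Finset.sum_const_zero, add_zero]
      exact Om_Xf hf t x y hp⟩

lemma rep_Om (w : List (Fin 4)) : WordRep BI w.length (fun φ => Om (GIter w φ)) := by
  induction w with
  | nil =>
    refine ((WordRep.word (B := BI) [] le_rfl ()).smul 0).congr fun φ hφ hr t x y hp => ?_
    exact (zero_mul _).trans (Om_radial hφ hr hp).symm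
  | cons a w ih =>
    obtain ⟨c, hc⟩ := Om_GammaF a
    have hw : ∀ j : Fin 3, WordRep BI (w.length + 1) (fun φ => pdi j (GIter w φ)) := by
      intro j
      fin_cases j
      · exact .word (0 :: w) le_rfl ()
      · exact .word (1 :: w) le_rfl ()
      · exact .word (2 :: w) le_rfl ()
    refine ((ih.gam locLin_BI a).add
      ((((hw 0).smul (c 0)).add ((hw 1).smul (c 1))).add ((hw 2).smul (c 2)))).congr ?_
    intro φ hφ _ t x y hp
    have := hc _ ((locLin_GIter w).sm hφ) t x y hp
    rw [Fin.sum_univ_three] at this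
    exact this.symm

lemma rep_Om_pdi (k : Fin 3) (w : List (Fin 4)) :
    WordRep pdi w.length (fun φ => Om (pdi k (GIter w φ))) := by
  have h1 : WordRep pdi w.length (fun φ => pdi k (Om (GIter w φ))) :=
    (rep_Om w).map locLin_BI (locLin_pdi k) fun v hv _ => (rep_pdi k v).mono hv
  refine (h1.add ((((rep_pdi 0 w).smul (-rotC k 0)).add ((rep_pdi 1 w).smul (-rotC k 1))).add
    ((rep_pdi 2 w).smul (-rotC k 2)))).congr fun φ hφ _ t x y hp => ?_
  simp only [Pi.add_apply, Pi.smul_apply, smul_eq_mul]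
  rw [pdi_Om k ((locLin_GIter w).sm hφ) hp, Fin.sum_univ_three]
  ring

/-- A family of bounds indexed by a finite type has a common constant. -/
lemma common_const {κ ι : Type} [Fintype κ] [Fintype ι] {B : ι → F3 → F3} {D : F3 → F3} {n : ℕ}
    {T : κ → F3 → F3}
    (h : ∀ k, ∃ C, 0 ≤ C ∧ ∀ φ, Sm φ → RadialF φ → ∀ t x y, (t, x, y) ∈ US →
      |D (T k φ) t x y| ≤ C * MS B D n φ t x y) :
    ∃ C, 0 ≤ C ∧ ∀ k φ, Sm φ → RadialF φ → ∀ t x y, (t, x, y) ∈ US →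
      |D (T k φ) t x y| ≤ C * MS B D n φ t x y := by
  choose C hC hb using h
  refine ⟨∑ k, C k, Finset.sum_nonneg fun k _ => hC k, fun k φ hφ hr t x y hp => ?_⟩
  exact (hb k φ hφ hr t x y hp).trans (mul_le_mul_of_nonneg_right
    (Finset.single_le_sum (fun k _ => hC k) (Finset.mem_univ k)) (MS_nonneg D φ t x y))

/-! ### Pointwise algebra -/

/-- Decay of the good derivatives `∂_i + ω_i ∂_t`: here `a` is a gradient at a point, with scaling
derivative `X` and rotation derivative `o`. -/
lemma good_deriv {t x y r a0 a1 a2 X o A σ : ℝ} (ht : 0 < t) (hr : 0 < r)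
    (hrr : r ^ 2 = x ^ 2 + y ^ 2) (htr : t ≤ 2 * r) (hσ : |t - r| ≤ σ)
    (h1 : |a1| ≤ A) (h2 : |a2| ≤ A)
    (hX : X = t * a0 + x * a1 + y * a2) (ho : o = x * a2 - y * a1) :
    |a1 + x / r * a0| ≤ (|X| + 2 * σ * A + 2 * |o|) / t ∧
    |a2 + y / r * a0| ≤ (|X| + 2 * σ * A + 2 * |o|) / t := by
  have hA : 0 ≤ A := (abs_nonneg _).trans h1
  have hx : |x / r| ≤ 1 := by
    rw [abs_div, abs_of_pos hr, div_le_one hr]; exact abs_le_of_sq_le_sq (by nlinarith) hr.le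
  have hy : |y / r| ≤ 1 := by
    rw [abs_div, abs_of_pos hr, div_le_one hr]; exact abs_le_of_sq_le_sq (by nlinarith) hr.le
  have hR : |x / r * a1 + y / r * a2| ≤ 2 * A := by
    calc _ ≤ |x / r| * |a1| + |y / r| * |a2| := by
          rw [← abs_mul, ← abs_mul]; exact abs_add_le _ _
      _ ≤ 1 * A + 1 * A := by gcongr
      _ = _ := by ring
  have htr' : |t / r| ≤ 2 := by
    rw [abs_of_pos (by positivity), div_le_iff₀ hr]; exact htr
  have hr0 : r ≠ 0 := ne_of_gt hr
  -- `t (∂_t + ∂_r) = X + (t - r) ∂_r`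
  have main : ∀ u v : ℝ, |u| ≤ 1 → |v| ≤ 1 →
      |u * (X + (t - r) * (x / r * a1 + y / r * a2)) + v * (t / r) * o|
        ≤ |X| + 2 * σ * A + 2 * |o| := by
    intro u v hu hv
    calc _ ≤ |u| * (|X| + |t - r| * |x / r * a1 + y / r * a2|) + |v| * |t / r| * |o| := by
          refine (abs_add_le _ _).trans ?_
          rw [abs_mul, abs_mul, abs_mul v, ← abs_mul (t - r)]
          gcongr
          exact abs_add_le _ _
      _ ≤ 1 * (|X| + σ * (2 * A)) + 1 * 2 * |o| := by
          have : 0 ≤ σ := (abs_nonneg _).trans hσ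
          gcongr
      _ = _ := by ring
  constructor
  · rw [le_div_iff₀ ht]
    have e : x / r * (X + (t - r) * (x / r * a1 + y / r * a2)) + -(y / r) * (t / r) * o =
        (a1 + x / r * a0) * t := by
      rw [hX, ho]; field_simp
      linear_combination (-(t * a1)) * hrr
    have h := main (x / r) (-(y / r)) hx (by rwa [abs_neg])
    rwa [e, abs_mul, abs_of_pos ht] at h
  · rw [le_div_iff₀ ht]
    have e : y / r * (X + (t - r) * (x / r * a1 + y / r * a2)) + x / r * (t / r) * o =
        (a2 + y / r * a0) * t := by
      rw [hX, ho]; field_simp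
      linear_combination (-(t * a2)) * hrr
    have h := main (y / r) (x / r) hy hx
    rwa [e, abs_mul, abs_of_pos ht] at h

/-- Algebra of the null condition: if the cubic form `g` vanishes at `p`, and `a`, `H` are multiples
of `p`, `p ⊗ p` up to the errors `Z`, `W`, every term of the contraction with `g` contains an
error. -/
lemma null_alg {g : Fin 3 → Fin 3 → Fin 3 → ℝ} {p a Z : Fin 3 → ℝ} {H W : Fin 3 → Fin 3 → ℝ}
    (hn : ∑ i, ∑ j, ∑ k, g i j k * p i * p j * p k = 0)
    (ha : ∀ i, a i = -p i * a 0 + Z i) (hH : ∀ j k, H j k = -p j * H 0 k + W j k)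
    (hs : ∀ k, H 0 k = H k 0) :
    ∑ i, ∑ j, ∑ k, g i j k * a i * H j k =
      ∑ i, ∑ j, ∑ k, g i j k * (Z i * H j k + a 0 * p i * (p j * W k 0 - W j k)) := by
  have h1 : ∀ i j k, g i j k * a i * H j k =
      g i j k * (Z i * H j k + a 0 * p i * (p j * W k 0 - W j k)) +
        (-(a 0 * H 0 0)) * (g i j k * p i * p j * p k) := by
    intro i j k
    have e := hH j k
    rw [hs k, hH k 0] at e
    linear_combination (g i j k * H j k) * ha i - (g i j k * p i * a 0) * e
  simp_rw [h1, Finset.sum_add_distrib, ← Finset.mul_sum, hn]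
  ring

lemma abs_sum3_le {g F : Fin 3 → Fin 3 → Fin 3 → ℝ} {K : ℝ} (h : ∀ i j k, |F i j k| ≤ K) :
    |∑ i, ∑ j, ∑ k, g i j k * F i j k| ≤ (∑ i, ∑ j, ∑ k, |g i j k|) * K := by
  simp_rw [Finset.sum_mul]
  refine (Finset.abs_sum_le_sum_abs _ _).trans (Finset.sum_le_sum fun i _ => ?_)
  refine (Finset.abs_sum_le_sum_abs _ _).trans (Finset.sum_le_sum fun j _ => ?_)
  refine (Finset.abs_sum_le_sum_abs _ _).trans (Finset.sum_le_sum fun k _ => ?_)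
  rw [abs_mul]
  exact mul_le_mul_of_nonneg_left (h i j k) (abs_nonneg _)

/-- The null form estimate at a point, in terms of the sizes of `∂u`, `∂²v`, `Xu`, `Ωu`, `X∂v`
and `Ω∂v`. -/
lemma null_bound {g : Fin 3 → Fin 3 → Fin 3 → ℝ}
    (hnull : ∀ p : Fin 3 → ℝ, (p 0) ^ 2 = (p 1) ^ 2 + (p 2) ^ 2 →
      ∑ i, ∑ j, ∑ k, g i j k * p i * p j * p k = 0)
    {u v : F3} {t x y A B P Q : ℝ} (ht : 0 < t) (hxy : (x, y) ≠ ((0 : ℝ), (0 : ℝ)))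
    (hA : ∀ i, |pdi i u t x y| ≤ A) (hB : ∀ j k, |pdi j (pdi k v) t x y| ≤ B)
    (hs : ∀ k, pdi 0 (pdi k v) t x y = pdi k (pdi 0 v) t x y)
    (hP : |Xf u t x y| + 2 * |Om u t x y| ≤ P)
    (hQ : ∀ k, |Xf (pdi k v) t x y| + 2 * |Om (pdi k v) t x y| ≤ Q) :
    |∑ i, ∑ j, ∑ k, g i j k * pdi i u t x y * pdi j (pdi k v) t x y| ≤
      6 * (∑ i, ∑ j, ∑ k, |g i j k|) / t * (sm t x y * A * B + P * B + A * Q) := by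
  have hA0 : 0 ≤ A := (abs_nonneg _).trans (hA 0)
  have hB0 : 0 ≤ B := (abs_nonneg _).trans (hB 0 0)
  have hP0 : 0 ≤ P := le_trans (by positivity) hP
  have hQ0 : 0 ≤ Q := le_trans (by positivity) (hQ 0)
  have hσ : 0 ≤ sm t x y := by unfold sm; positivity
  have hG0 : 0 ≤ ∑ i, ∑ j, ∑ k, |g i j k| := by positivity
  set G := ∑ i, ∑ j, ∑ k, |g i j k|
  have hpos : 0 < x ^ 2 + y ^ 2 := by
    by_contra! hcon
    have hx : x = 0 := by nlinarith [sq_nonneg x, sq_nonneg y]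
    have hy : y = 0 := by nlinarith [sq_nonneg x, sq_nonneg y]
    exact hxy (by rw [hx, hy])
  have hr : 0 < rad x y := Real.sqrt_pos.2 hpos
  have hrr : rad x y ^ 2 = x ^ 2 + y ^ 2 := Real.sq_sqrt hpos.le
  have hσr : |t - rad x y| ≤ sm t x y := by unfold sm; linarith
  rcases le_total t (2 * rad x y) with htr | htr
  · -- near the light cone: decompose along the null covector `(-1, ω)`
    have hr0 := hr.ne'
    set z := (P + 2 * sm t x y * A) / t with hz
    set w := (Q + 2 * sm t x y * B) / t with hw
    have hz0 : 0 ≤ z := by positivity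
    have hw0 : 0 ≤ w := by positivity
    set p : Fin 3 → ℝ := ![-1, x / rad x y, y / rad x y] with hpdef
    have hp1 : ∀ i, |p i| ≤ 1 := by
      have hx : |x / rad x y| ≤ 1 := by
        rw [abs_div, abs_of_pos hr, div_le_one hr]; exact abs_le_of_sq_le_sq (by nlinarith) hr.le
      have hy : |y / rad x y| ≤ 1 := by
        rw [abs_div, abs_of_pos hr, div_le_one hr]; exact abs_le_of_sq_le_sq (by nlinarith) hr.le
      intro i
      fin_cases i
      · simp [hpdef]
      · exact hx
      · exact hy
    have hn := hnull p (by
      simp only [hpdef, Matrix.cons_val_zero, Matrix.cons_val_one, Matrix.cons_val]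
      field_simp
      linarith)
    have good : ∀ (f : F3) (R S : ℝ), (∀ i, |pdi i f t x y| ≤ S) →
        |Xf f t x y| + 2 * |Om f t x y| ≤ R → ∀ i, |pdi i f t x y + p i * pdi 0 f t x y| ≤
          (R + 2 * sm t x y * S) / t := by
      intro f R S hS hR i
      have hS0 : 0 ≤ S := (abs_nonneg _).trans (hS 0)
      have hR0 : 0 ≤ R := le_trans (by positivity) hR
      obtain ⟨g1, g2⟩ := good_deriv (a0 := pdi 0 f t x y) ht hr hrr htr hσr (hS 1) (hS 2)
        (X := Xf f t x y) (o := Om f t x y) rfl rfl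
      have hle : (|Xf f t x y| + 2 * sm t x y * S + 2 * |Om f t x y|) / t ≤
          (R + 2 * sm t x y * S) / t := div_le_div_of_nonneg_right (by linarith) ht.le
      fin_cases i
      · simp [hpdef]; positivity
      · exact g1.trans hle
      · exact g2.trans hle
    rw [null_alg (a := fun i => pdi i u t x y) (H := fun j k => pdi j (pdi k v) t x y)
      (Z := fun i => pdi i u t x y + p i * pdi 0 u t x y)
      (W := fun j k => pdi j (pdi k v) t x y + p j * pdi 0 (pdi k v) t x y) hn
      (fun i => by ring) (fun j k => by ring) hs]
    have hZ := good u P A hA hP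
    have hW : ∀ j k, |pdi j (pdi k v) t x y + p j * pdi 0 (pdi k v) t x y| ≤ w :=
      fun j k => good (pdi k v) Q B (fun i => hB i k) (hQ k) j
    refine (abs_sum3_le (K := z * B + A * 1 * (1 * w + w)) fun i j k => ?_).trans ?_
    · refine (abs_add_le _ _).trans ?_
      rw [abs_mul, abs_mul, abs_mul]
      refine add_le_add (mul_le_mul (hZ i) (hB j k) (abs_nonneg _) hz0) ?_
      refine mul_le_mul (mul_le_mul (hA 0) (hp1 i) (abs_nonneg _) hA0) ?_ (abs_nonneg _)
        (by positivity)
      refine (abs_sub _ _).trans ?_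
      rw [abs_mul]
      exact add_le_add (mul_le_mul (hp1 j) (hW k 0) (abs_nonneg _) zero_le_one) (hW j k)
    · have e : z * B + A * 1 * (1 * w + w) =
          (P * B + 6 * (sm t x y * A * B) + 2 * (A * Q)) / t := by
        rw [hz, hw]; field_simp; ring
      rw [e, mul_div_assoc', div_mul_eq_mul_div]
      refine div_le_div_of_nonneg_right ?_ ht.le
      nlinarith [mul_nonneg hG0 (mul_nonneg hP0 hB0), mul_nonneg hG0 (mul_nonneg hA0 hQ0)]
  · -- away from the light cone: `t ≤ 2 σ₋`
    have hts : t ≤ 2 * sm t x y := by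
      have := le_abs_self (t - rad x y)
      unfold sm; linarith
    have h1 : |∑ i, ∑ j, ∑ k, g i j k * pdi i u t x y * pdi j (pdi k v) t x y| ≤ G * (A * B) := by
      simp_rw [mul_assoc]
      refine abs_sum3_le fun i j k => ?_
      rw [abs_mul]
      exact mul_le_mul (hA i) (hB j k) (abs_nonneg _) hA0
    refine h1.trans ?_
    rw [div_mul_eq_mul_div, le_div_iff₀ ht]
    have hGAB : 0 ≤ G * (A * B) := by positivity
    nlinarith [mul_le_mul_of_nonneg_left hts hGAB, mul_nonneg hG0 (mul_nonneg hP0 hB0),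
      mul_nonneg hG0 (mul_nonneg hA0 hQ0), mul_nonneg hGAB hσ]

/-! ### Products of sums over words -/

/-- A product of two sums over words, bounded by a sum of common bounds for the products. -/
lemma MS_mul_le {ι κ : Type} [Fintype ι] [Fintype κ] {B : ι → F3 → F3} {B' : κ → F3 → F3}
    {D D' : F3 → F3} {n m : ℕ} {φ : F3} {t x y s S N : ℝ}
    {F : ∀ b c : ℕ, (Fin b → Fin 4) → (Fin c → Fin 4) → ℝ}
    (hS : S = ∑ b ∈ Finset.range (n + 1), ∑ c ∈ Finset.range (m + 1), ∑ wp, ∑ wq, F b c wp wq)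
    (hN : (Fintype.card ι * Fintype.card κ : ℝ) = N)
    (h : ∀ b c wp wq j k, s * (|D (GIter (List.ofFn wp) (B j φ)) t x y| *
      |D' (GIter (List.ofFn wq) (B' k φ)) t x y|) ≤ F b c wp wq) :
    s * (MS B D n φ t x y * MS B' D' m φ t x y) ≤ N * S := by
  unfold MS
  subst hS hN
  rw [Finset.sum_mul_sum]
  simp_rw [Finset.sum_mul_sum, Finset.mul_sum]
  refine Finset.sum_le_sum fun b _ => Finset.sum_le_sum fun c _ => Finset.sum_le_sum fun wp _ =>
    Finset.sum_le_sum fun wq _ => ?_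
  refine (Finset.sum_le_sum fun j _ => Finset.sum_le_sum fun k _ => h b c wp wq j k).trans_eq ?_
  simp [mul_assoc]

/-- Combination of the constants of the three terms. -/
lemma combine {G CA CB CP CQ σ M1 MB M0 MQ S1 S2 S3 : ℝ} (hG0 : 0 ≤ G) (hCA : 0 ≤ CA)
    (hCB : 0 ≤ CB) (hCP : 0 ≤ CP) (hCQ : 0 ≤ CQ) (hσ : 0 ≤ σ) (hM1 : 0 ≤ M1) (hMB : 0 ≤ MB)
    (hM0 : 0 ≤ M0) (hMQ : 0 ≤ MQ) (e1 : σ * (M1 * MB) ≤ 27 * S1) (e2 : M0 * MB ≤ 9 * S2)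
    (e3 : M1 * MQ ≤ 9 * S3) :
    6 * G * (σ * (CA * M1) * (CB * MB) + CP * M0 * (CB * MB) + CA * M1 * (CQ * MQ)) ≤
      (6 * G * (27 * (CA * CB) + 9 * (CP * CB) + 9 * (CA * CQ)) + 1) * (S1 + S2 + S3) := by
  have n1 : 0 ≤ S1 := by linarith [mul_nonneg hσ (mul_nonneg hM1 hMB)]
  have n2 : 0 ≤ S2 := by linarith [mul_nonneg hM0 hMB]
  have n3 : 0 ≤ S3 := by linarith [mul_nonneg hM1 hMQ]
  have kab : 0 ≤ CA * CB := by positivity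
  have kpb : 0 ≤ CP * CB := by positivity
  have kaq : 0 ≤ CA * CQ := by positivity
  calc 6 * G * (σ * (CA * M1) * (CB * MB) + CP * M0 * (CB * MB) + CA * M1 * (CQ * MQ))
      = 6 * G * ((CA * CB) * (σ * (M1 * MB)) + (CP * CB) * (M0 * MB)
        + (CA * CQ) * (M1 * MQ)) := by ring
    _ ≤ 6 * G * ((CA * CB) * (27 * S1) + (CP * CB) * (9 * S2) + (CA * CQ) * (9 * S3)) := by
        gcongr
    _ ≤ 6 * G * ((CA * CB) * (27 * (S1 + S2 + S3)) + (CP * CB) * (9 * (S1 + S2 + S3))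
        + (CA * CQ) * (9 * (S1 + S2 + S3))) := by
        gcongr <;> linarith
    _ ≤ _ := by linarith

/-- **Null form estimate with decay for radial functions** ((3.10)): for a cubic null
form `g` and a radially symmetric `φ̇`,
`|Σ g_i^{jk} ∂_iΓ^αφ̇ ∂²_{jk}Γ^βφ̇| ≤ (C/t)(Σ|σ₋Γ^p∂φ̇ ∂Γ^q∂φ̇| + Σ|Γ^pφ̇ ∂Γ^q∂φ̇|
+ Σ|Γ^p∂φ̇ Γ^q∂φ̇|)` with the indicated ranges of `p, q`. -/
theorem null_form_radial_decay (g : Fin 3 → Fin 3 → Fin 3 → ℝ)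
    (hsym : ∀ i j k, g i j k = g i k j)
    (hnull : ∀ p : Fin 3 → ℝ, (p 0) ^ 2 = (p 1) ^ 2 + (p 2) ^ 2 →
      ∑ i, ∑ j, ∑ k, g i j k * p i * p j * p k = 0)
    (α β : List (Fin 4)) :
    ∃ C > 0, ∀ φ : F3,
      ContDiffOn ℝ (⊤ : ℕ∞) (fun p : ℝ × ℝ × ℝ => φ p.1 p.2.1 p.2.2)
        {p : ℝ × ℝ × ℝ | 0 < p.1 ∧ (p.2.1, p.2.2) ≠ ((0 : ℝ), (0 : ℝ))} →
      RadialF φ →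
      ∀ t x y : ℝ, 0 < t → (x, y) ≠ ((0 : ℝ), (0 : ℝ)) →
        |∑ i, ∑ j, ∑ k,
            g i j k * pdi i (GIter α φ) t x y * pdi j (pdi k (GIter β φ)) t x y|
          ≤ C / t *
            ((∑ b ∈ Finset.range (α.length + 1), ∑ c ∈ Finset.range (β.length + 1),
              ∑ wp : Fin b → Fin 4, ∑ wq : Fin c → Fin 4,
                ⨆ v : Fin 3 × Fin 3 × Fin 3,
                  |sm t x y * GIter (List.ofFn wp) (pdi v.1 φ) t x y *
                    pdi v.2.1 (GIter (List.ofFn wq) (pdi v.2.2 φ)) t x y|)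
            + (∑ b ∈ Finset.range (α.length + 2), ∑ c ∈ Finset.range (β.length + 1),
              ∑ wp : Fin b → Fin 4, ∑ wq : Fin c → Fin 4,
                ⨆ v : Fin 3 × Fin 3,
                  |GIter (List.ofFn wp) φ t x y *
                    pdi v.1 (GIter (List.ofFn wq) (pdi v.2 φ)) t x y|)
            + (∑ b ∈ Finset.range (α.length + 1), ∑ c ∈ Finset.range (β.length + 2),
              ∑ wp : Fin b → Fin 4, ∑ wq : Fin c → Fin 4,
                ⨆ v : Fin 3 × Fin 3,
                  |GIter (List.ofFn wp) (pdi v.1 φ) t x y *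
                    GIter (List.ofFn wq) (pdi v.2 φ) t x y|)) := by
  choose CB' hCB' hB' using fun j : Fin 3 =>
    common_const fun k => (rep_pdi k β).bound locLin_pdi (locLin_pdi j)
  obtain ⟨CA, hCA, hA⟩ := common_const fun i => (rep_pdi i α).bound locLin_pdi locLin_id
  obtain ⟨CX, hCX, hX⟩ := (WordRep.word (B := BI) (n := α.length + 1) (3 :: α)
    le_rfl ()).bound locLin_BI locLin_id
  obtain ⟨CO, hCO, hO⟩ := ((rep_Om α).mono (Nat.le_succ _)).bound locLin_BI locLin_id
  obtain ⟨CY, hCY, hY⟩ := common_const fun k =>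
    ((rep_pdi k β).gam locLin_pdi 3).bound locLin_pdi locLin_id
  obtain ⟨CQ, hCQ, hQ⟩ := common_const fun k =>
    ((rep_Om_pdi k β).mono (Nat.le_succ _)).bound locLin_pdi locLin_id
  set G := ∑ i, ∑ j, ∑ k, |g i j k| with hG
  have hG0 : 0 ≤ G := by positivity
  set CB := ∑ j, CB' j with hCBdef
  have hCB : 0 ≤ CB := Finset.sum_nonneg fun j _ => hCB' j
  refine ⟨6 * G * (27 * (CA * CB) + 9 * ((CX + 2 * CO) * CB) + 9 * (CA * (CY + 2 * CQ))) + 1,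
    by positivity, ?_⟩
  intro φ hφ hrad t x y ht hxy
  have hp : (t, x, y) ∈ US := ⟨ht, hxy⟩
  have hφ : Sm φ := hφ
  have hσ : 0 ≤ sm t x y := by unfold sm; positivity
  set M1 := MS pdi (fun f => f) α.length φ t x y with hM1
  set MB := ∑ i, MS pdi (pdi i) β.length φ t x y with hMB
  set M0 := MS BI (fun f => f) (α.length + 1) φ t x y with hM0
  set MQ := MS pdi (fun f => f) (β.length + 1) φ t x y with hMQ
  have hM1n : 0 ≤ M1 := MS_nonneg _ _ _ _ _
  have hMBn : 0 ≤ MB := Finset.sum_nonneg fun i _ => MS_nonneg _ _ _ _ _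
  have hM0n : 0 ≤ M0 := MS_nonneg _ _ _ _ _
  have hMQn : 0 ≤ MQ := MS_nonneg _ _ _ _ _
  have hBb : ∀ j k, |pdi j (pdi k (GIter β φ)) t x y| ≤ CB * MB := fun j k =>
    (hB' j k φ hφ hrad t x y hp).trans (mul_le_mul
      (Finset.single_le_sum (fun j _ => hCB' j) (Finset.mem_univ j))
      (Finset.single_le_sum (f := fun i => MS pdi (pdi i) β.length φ t x y)
        (fun i _ => MS_nonneg _ _ _ _ _) (Finset.mem_univ j)) (MS_nonneg _ _ _ _ _) hCB)
  have hsβ : Sm (GIter β φ) := (locLin_GIter β).sm hφ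
  have main := null_bound (u := GIter α φ) (v := GIter β φ) hnull ht hxy
    (A := CA * M1) (B := CB * MB) (P := (CX + 2 * CO) * M0) (Q := (CY + 2 * CQ) * MQ)
    (fun i => hA i φ hφ hrad t x y hp) hBb
    (fun k => pdi_comm 0 k hsβ t x y hp)
    (by
      have h1 : |Xf (GIter α φ) t x y| ≤ CX * M0 := hX φ hφ hrad t x y hp
      have h2 : |Om (GIter α φ) t x y| ≤ CO * M0 := hO φ hφ hrad t x y hp
      linarith)
    (fun k => by
      have h1 : |Xf (pdi k (GIter β φ)) t x y| ≤ CY * MQ := hY k φ hφ hrad t x y hp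
      have h2 : |Om (pdi k (GIter β φ)) t x y| ≤ CQ * MQ := hQ k φ hφ hrad t x y hp
      linarith)
  refine main.trans ?_
  rw [← hG]
  -- the three products of sums against the three sums of suprema
  set S1 : ℝ := ∑ b ∈ Finset.range (α.length + 1), ∑ c ∈ Finset.range (β.length + 1),
    ∑ wp : Fin b → Fin 4, ∑ wq : Fin c → Fin 4, ⨆ v : Fin 3 × Fin 3 × Fin 3,
      |sm t x y * GIter (List.ofFn wp) (pdi v.1 φ) t x y *
        pdi v.2.1 (GIter (List.ofFn wq) (pdi v.2.2 φ)) t x y| with hS1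
  set S2 : ℝ := ∑ b ∈ Finset.range (α.length + 2), ∑ c ∈ Finset.range (β.length + 1),
    ∑ wp : Fin b → Fin 4, ∑ wq : Fin c → Fin 4, ⨆ v : Fin 3 × Fin 3,
      |GIter (List.ofFn wp) φ t x y *
        pdi v.1 (GIter (List.ofFn wq) (pdi v.2 φ)) t x y| with hS2
  set S3 : ℝ := ∑ b ∈ Finset.range (α.length + 1), ∑ c ∈ Finset.range (β.length + 2),
    ∑ wp : Fin b → Fin 4, ∑ wq : Fin c → Fin 4, ⨆ v : Fin 3 × Fin 3,
      |GIter (List.ofFn wp) (pdi v.1 φ) t x y *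
        GIter (List.ofFn wq) (pdi v.2 φ) t x y| with hS3
  have e1 : sm t x y * (M1 * MB) ≤ 27 * S1 := by
    have h : ∀ i, sm t x y * (M1 * MS pdi (pdi i) β.length φ t x y) ≤ 9 * S1 := by
      intro i
      refine MS_mul_le hS1 (by simp; norm_num) fun b c wp wq j k => ?_
      refine le_trans (le_of_eq ?_) (le_ciSup (f := fun v : Fin 3 × Fin 3 × Fin 3 =>
        |sm t x y * GIter (List.ofFn wp) (pdi v.1 φ) t x y *
        pdi v.2.1 (GIter (List.ofFn wq) (pdi v.2.2 φ)) t x y|)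
        (Set.finite_range _).bddAbove (j, i, k))
      simp only [abs_mul, abs_of_nonneg hσ, mul_assoc]
    rw [hMB, Finset.mul_sum, Finset.mul_sum]
    refine (Finset.sum_le_sum fun i _ => h i).trans_eq ?_
    simp; ring
  have e2 : M0 * MB ≤ 9 * S2 := by
    have h : ∀ i, 1 * (M0 * MS pdi (pdi i) β.length φ t x y) ≤ 3 * S2 := by
      intro i
      refine MS_mul_le hS2 (by simp) fun b c wp wq j k => ?_
      refine le_trans (le_of_eq ?_) (le_ciSup (f := fun v : Fin 3 × Fin 3 =>
        |GIter (List.ofFn wp) φ t x y *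
        pdi v.1 (GIter (List.ofFn wq) (pdi v.2 φ)) t x y|)
        (Set.finite_range _).bddAbove (i, k))
      simp only [abs_mul, one_mul, BI]
    simp only [one_mul] at h
    rw [hMB, Finset.mul_sum]
    refine (Finset.sum_le_sum fun i _ => h i).trans_eq ?_
    simp; ring
  have e3 : M1 * MQ ≤ 9 * S3 := by
    rw [← one_mul (M1 * MQ)]
    refine MS_mul_le hS3 (by simp; norm_num) fun b c wp wq j k => ?_
    refine le_trans (le_of_eq ?_) (le_ciSup (f := fun v : Fin 3 × Fin 3 =>
      |GIter (List.ofFn wp) (pdi v.1 φ) t x y *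
      GIter (List.ofFn wq) (pdi v.2 φ) t x y|)
      (Set.finite_range _).bddAbove (j, k))
    simp only [abs_mul, one_mul]
  rw [div_mul_eq_mul_div, div_mul_eq_mul_div]
  exact div_le_div_of_nonneg_right (combine hG0 hCA hCB (by positivity) (by positivity) hσ hM1n
    hMBn hM0n hMQn e1 e2 e3) ht.le

end
end
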